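/- For any S_G ⊆ {1,…,N_G} and S_B ⊆ {1,…,E} with |S_G| + |S_B| = N_G − 1 and S_G ⊥ S_B, there exist f* ∈ ℝ^{N_G} with f* ≥ 0 componentwise, ξ* ∈ Ω_ξ and s^l* ∈ Ω_sl(ξ*) such that the DC-OPF with data (f*, ξ*, s^l*) has a unique optimal solution, and the binding inequality constraints at this optimal solution consist of exactly one generation bound (upper or lower) for each generator i ∈ S_G, exactly one flow bound (upper or lower) for each branch e ∈ S_B, and no other inequality constraint is binding. -/

import Mathlib

open Matrix

noncomputable section

/-- Parameter tuple ξ = (s̄, s̲, p̄, p̲). -/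
abbrev XiT (NG E : ℕ) : Type := (Fin NG → ℝ) × (Fin NG → ℝ) × (Fin E → ℝ) × (Fin E → ℝ)

/-- Each column of `C` has exactly one `+1`, one `-1`, and zeros elsewhere. -/
def IsIncidence {NG NL E : ℕ} (C : Matrix (Fin (NG + NL)) (Fin E) ℝ) : Prop :=
  ∀ e : Fin E, ∃ u v : Fin (NG + NL), u ≠ v ∧ C u e = 1 ∧ C v e = -1 ∧
    ∀ w : Fin (NG + NL), w ≠ u → w ≠ v → C w e = 0

/-- Connectedness: the kernel of `Cᵀ` consists exactly of the constant vectors. -/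
def ConnectedIncidence {NG NL E : ℕ} (C : Matrix (Fin (NG + NL)) (Fin E) ℝ) : Prop :=
  ∀ x : Fin (NG + NL) → ℝ, Cᵀ *ᵥ x = 0 ↔ ∃ c : ℝ, x = fun _ => c

/-- `B` is diagonal with strictly positive diagonal entries. -/
def PosDiag {E : ℕ} (B : Matrix (Fin E) (Fin E) ℝ) : Prop :=
  (∀ e, 0 < B e e) ∧ ∀ e e' : Fin E, e ≠ e' → B e e' = 0

/-- Feasibility of `(s^g, θ)` for the DC-OPF with limits `ξ` and loads `sl`. -/
def Feasible {NG NL E : ℕ} (C : Matrix (Fin (NG + NL)) (Fin E) ℝ)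
    (B : Matrix (Fin E) (Fin E) ℝ) (ξ : XiT NG E) (sl : Fin NL → ℝ)
    (sg : Fin NG → ℝ) (θ : Fin (NG + NL) → ℝ) : Prop :=
  (∀ h : 0 < NG + NL, θ ⟨0, h⟩ = 0) ∧
  (C * B * Cᵀ) *ᵥ θ = Fin.append sg (fun j => -(sl j)) ∧
  (∀ i, ξ.2.1 i ≤ sg i ∧ sg i ≤ ξ.1 i) ∧
  (∀ e, ξ.2.2.2 e ≤ ((B * Cᵀ) *ᵥ θ) e ∧ ((B * Cᵀ) *ᵥ θ) e ≤ ξ.2.2.1 e)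

/-- The set Ω_ξ of admissible system limits. -/
def OmegaXi {NG NL E : ℕ} (C : Matrix (Fin (NG + NL)) (Fin E) ℝ)
    (B : Matrix (Fin E) (Fin E) ℝ) : Set (XiT NG E) :=
  { ξ | (∀ i, 0 ≤ ξ.2.1 i) ∧ (∀ i, ξ.2.1 i < ξ.1 i) ∧ (∀ e, ξ.2.2.2 e < ξ.2.2.1 e) ∧
    ∃ sl : Fin NL → ℝ, (∀ j, 0 < sl j) ∧ ∃ sg θ, Feasible C B ξ sl sg θ }

/-- The set Ω_sl(ξ) of strictly positive feasible load profiles. -/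
def OmegaSl {NG NL E : ℕ} (C : Matrix (Fin (NG + NL)) (Fin E) ℝ)
    (B : Matrix (Fin E) (Fin E) ℝ) (ξ : XiT NG E) : Set (Fin NL → ℝ) :=
  { sl | (∀ j, 0 < sl j) ∧ ∃ sg θ, Feasible C B ξ sl sg θ }

/-- `(sg, θ)` is an optimal solution of the DC-OPF. -/
def IsOptimal {NG NL E : ℕ} (C : Matrix (Fin (NG + NL)) (Fin E) ℝ)
    (B : Matrix (Fin E) (Fin E) ℝ) (f : Fin NG → ℝ) (ξ : XiT NG E)
    (sl : Fin NL → ℝ) (sg : Fin NG → ℝ) (θ : Fin (NG + NL) → ℝ) : Prop :=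
  Feasible C B ξ sl sg θ ∧
  ∀ sg' θ', Feasible C B ξ sl sg' θ' → f ⬝ᵥ sg ≤ f ⬝ᵥ sg'

/-- The matrix M: first N rows are C B Cᵀ, last row is e₁ᵀ. -/
def Mmat {NG NL E : ℕ} (C : Matrix (Fin (NG + NL)) (Fin E) ℝ)
    (B : Matrix (Fin E) (Fin E) ℝ) : Matrix (Fin (NG + NL + 1)) (Fin (NG + NL)) ℝ :=
  Matrix.of fun i j => if h : (i : ℕ) < NG + NL then (C * B * Cᵀ) ⟨(i : ℕ), h⟩ j
    else if (j : ℕ) = 0 then 1 else 0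

/-- KKT point for the DC-OPF. -/
def IsKKT {NG NL E : ℕ} (C : Matrix (Fin (NG + NL)) (Fin E) ℝ)
    (B : Matrix (Fin E) (Fin E) ℝ) (f : Fin NG → ℝ) (ξ : XiT NG E)
    (sl : Fin NL → ℝ) (sg : Fin NG → ℝ) (θ : Fin (NG + NL) → ℝ)
    (τ : Fin (NG + NL + 1) → ℝ) (μp μm : Fin E → ℝ) (lp lm : Fin NG → ℝ) : Prop :=
  Feasible C B ξ sl sg θ ∧
  (Mmat C B)ᵀ *ᵥ τ + (C * B) *ᵥ (μp - μm) = 0 ∧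
  (∀ i : Fin NG, -f i = -τ (Fin.castLE (by omega) i) + lp i - lm i) ∧
  (∀ e, 0 ≤ μp e) ∧ (∀ e, 0 ≤ μm e) ∧ (∀ i, 0 ≤ lp i) ∧ (∀ i, 0 ≤ lm i) ∧
  μp ⬝ᵥ (((B * Cᵀ) *ᵥ θ) - ξ.2.2.1) = 0 ∧
  μm ⬝ᵥ (ξ.2.2.2 - ((B * Cᵀ) *ᵥ θ)) = 0 ∧
  lp ⬝ᵥ (sg - ξ.1) = 0 ∧
  lm ⬝ᵥ (ξ.2.1 - sg) = 0

/-- ℓ₀ "norm": number of nonzero entries. -/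
def nnz {n : ℕ} (v : Fin n → ℝ) : ℕ := Set.ncard { i | v i ≠ 0 }

/-- The set Ω_f of well-behaved cost vectors. -/
def OmegaF {NG NL E : ℕ} (C : Matrix (Fin (NG + NL)) (Fin E) ℝ)
    (B : Matrix (Fin E) (Fin E) ℝ) : Set (Fin NG → ℝ) :=
  { f | (∀ i, 0 ≤ f i) ∧
    ∀ ξ ∈ OmegaXi C B, ∀ sl ∈ OmegaSl C B ξ,
      (∃! p : (Fin NG → ℝ) × (Fin (NG + NL) → ℝ), IsOptimal C B f ξ sl p.1 p.2) ∧
      ∀ sg θ τ μp μm lp lm, IsKKT C B f ξ sl sg θ τ μp μm lp lm →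
        NG - 1 ≤ nnz μp + nnz μm + nnz lp + nnz lm }

/-- Number of binding inequality constraints at `(sg, θ)` (among the 2N_G + 2E). -/
def bindingCount {NG NL E : ℕ} (C : Matrix (Fin (NG + NL)) (Fin E) ℝ)
    (B : Matrix (Fin E) (Fin E) ℝ) (ξ : XiT NG E) (sg : Fin NG → ℝ)
    (θ : Fin (NG + NL) → ℝ) : ℕ :=
  Set.ncard { i : Fin NG | sg i = ξ.1 i } + Set.ncard { i : Fin NG | sg i = ξ.2.1 i } +
  Set.ncard { e : Fin E | ((B * Cᵀ) *ᵥ θ) e = ξ.2.2.1 e } +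
  Set.ncard { e : Fin E | ((B * Cᵀ) *ᵥ θ) e = ξ.2.2.2 e }

/-- ~Ω_sl(ξ, f): loads with exactly N_G − 1 binding constraints at the optimum. -/
def TOmegaSl {NG NL E : ℕ} (C : Matrix (Fin (NG + NL)) (Fin E) ℝ)
    (B : Matrix (Fin E) (Fin E) ℝ) (f : Fin NG → ℝ) (ξ : XiT NG E) :
    Set (Fin NL → ℝ) :=
  { sl | sl ∈ OmegaSl C B ξ ∧
    ∀ sg θ, IsOptimal C B f ξ sl sg θ → bindingCount C B ξ sg θ = NG - 1 }

/-- Indices of binding inequality constraints: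
`inl i` = upper generation, `inr (inl i)` = lower generation,
`inr (inr (inl e))` = upper flow, `inr (inr (inr e))` = lower flow. -/
def BindingIdx {NG NL E : ℕ} (C : Matrix (Fin (NG + NL)) (Fin E) ℝ)
    (B : Matrix (Fin E) (Fin E) ℝ) (ξ : XiT NG E) (sg : Fin NG → ℝ)
    (θ : Fin (NG + NL) → ℝ) : Set (Fin NG ⊕ Fin NG ⊕ Fin E ⊕ Fin E) :=
  { c | match c with
    | Sum.inl i => sg i = ξ.1 i
    | Sum.inr (Sum.inl i) => sg i = ξ.2.1 i
    | Sum.inr (Sum.inr (Sum.inl e)) => ((B * Cᵀ) *ᵥ θ) e = ξ.2.2.1 e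
    | Sum.inr (Sum.inr (Sum.inr e)) => ((B * Cᵀ) *ᵥ θ) e = ξ.2.2.2 e }

/-- Gradients of the N + 1 equality constraints, as vectors in ℝ^{N_G} × ℝ^{N}. -/
def eqGrad {NG NL E : ℕ} (C : Matrix (Fin (NG + NL)) (Fin E) ℝ)
    (B : Matrix (Fin E) (Fin E) ℝ) :
    (Unit ⊕ Fin (NG + NL)) → (Fin NG → ℝ) × (Fin (NG + NL) → ℝ)
  | Sum.inl _ => (0, fun j => if (j : ℕ) = 0 then 1 else 0)
  | Sum.inr i => ((fun k : Fin NG => if (k : ℕ) = (i : ℕ) then -1 else 0),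
      fun j => (C * B * Cᵀ) i j)

/-- Gradients of the inequality constraints. -/
def ineqGrad {NG NL E : ℕ} (C : Matrix (Fin (NG + NL)) (Fin E) ℝ)
    (B : Matrix (Fin E) (Fin E) ℝ) :
    (Fin NG ⊕ Fin NG ⊕ Fin E ⊕ Fin E) → (Fin NG → ℝ) × (Fin (NG + NL) → ℝ)
  | Sum.inl i => (Pi.single i 1, 0)
  | Sum.inr (Sum.inl i) => (-Pi.single i 1, 0)
  | Sum.inr (Sum.inr (Sum.inl e)) => (0, fun j => (B * Cᵀ) e j)
  | Sum.inr (Sum.inr (Sum.inr e)) => (0, fun j => -(B * Cᵀ) e j)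

/-- The family of gradients of all equality constraints together with the binding
inequality constraints at `(sg, θ)`. -/
def fullGrad {NG NL E : ℕ} (C : Matrix (Fin (NG + NL)) (Fin E) ℝ)
    (B : Matrix (Fin E) (Fin E) ℝ) (ξ : XiT NG E) (sg : Fin NG → ℝ)
    (θ : Fin (NG + NL) → ℝ) :
    ((Unit ⊕ Fin (NG + NL)) ⊕ ↥(BindingIdx C B ξ sg θ)) →
      (Fin NG → ℝ) × (Fin (NG + NL) → ℝ) :=
  fun i => match i with
    | Sum.inl j => eqGrad C B j
    | Sum.inr c => ineqGrad C B c.1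

/-- S_G ⊥ S_B : the equality-constraint gradients together with the gradients
`(e_i, 0)`, `i ∈ S_G`, and `(0, row e of B Cᵀ)`, `e ∈ S_B`, are linearly independent. -/
def Perp {NG NL E : ℕ} (C : Matrix (Fin (NG + NL)) (Fin E) ℝ)
    (B : Matrix (Fin E) (Fin E) ℝ) (SG : Finset (Fin NG)) (SB : Finset (Fin E)) : Prop :=
  LinearIndependent ℝ (fun i : (Unit ⊕ Fin (NG + NL)) ⊕ (↥SG ⊕ ↥SB) =>
    match i with
    | Sum.inl j => eqGrad C B j
    | Sum.inr (Sum.inl g) => ((Pi.single (g : Fin NG) 1 : Fin NG → ℝ), (0 : Fin (NG + NL) → ℝ))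
    | Sum.inr (Sum.inr e) => ((0 : Fin NG → ℝ), fun j => (B * Cᵀ) (e : Fin E) j))

/-- The OPF operator: the generation part of the (unique) optimal solution. -/
def OPFmap {NG NL E : ℕ} (C : Matrix (Fin (NG + NL)) (Fin E) ℝ)
    (B : Matrix (Fin E) (Fin E) ℝ) (f : Fin NG → ℝ) (ξ : XiT NG E)
    (sl : Fin NL → ℝ) : Fin NG → ℝ := by
  classical
  exact if h : ∃ p : (Fin NG → ℝ) × (Fin (NG + NL) → ℝ), IsOptimal C B f ξ sl p.1 p.2
    then h.choose.1 else 0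

/-- The matrix R(S_G, S_B)ᵀ: rows N_G+1,…,N of C B Cᵀ; the rows of C B Cᵀ indexed
by S_G; the rows of B Cᵀ indexed by S_B; and e₁ᵀ. -/
def Rmat {NG NL E : ℕ} (C : Matrix (Fin (NG + NL)) (Fin E) ℝ)
    (B : Matrix (Fin E) (Fin E) ℝ) (SG : Finset (Fin NG)) (SB : Finset (Fin E)) :
    Matrix ((Fin NL ⊕ (↥SG ⊕ ↥SB)) ⊕ Unit) (Fin (NG + NL)) ℝ :=
  Matrix.of fun i j => match i with
    | Sum.inl (Sum.inl k) => (C * B * Cᵀ) (Fin.natAdd NG k) j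
    | Sum.inl (Sum.inr (Sum.inl g)) => (C * B * Cᵀ) (Fin.castAdd NL (g : Fin NG)) j
    | Sum.inl (Sum.inr (Sum.inr e)) => (B * Cᵀ) (e : Fin E) j
    | Sum.inr _ => if (j : ℕ) = 0 then 1 else 0

/-- The matrix Π applied to a load vector: embeds ℝ^{N_L} in the row-index space. -/
def padSl {NG NL E : ℕ} (SG : Finset (Fin NG)) (SB : Finset (Fin E))
    (v : Fin NL → ℝ) : (Fin NL ⊕ (↥SG ⊕ ↥SB)) ⊕ Unit → ℝ
  | Sum.inl (Sum.inl k) => v k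
  | _ => 0

/-- J(S_G, S_B) as a map: v ↦ −G (R(S_G,S_B)ᵀ)⁻¹ Π v, where G consists of the
first N_G rows of C B Cᵀ. -/
def JFun {NG NL E : ℕ} (C : Matrix (Fin (NG + NL)) (Fin E) ℝ)
    (B : Matrix (Fin E) (Fin E) ℝ) (SG : Finset (Fin NG)) (SB : Finset (Fin E))
    (v : Fin NL → ℝ) : Fin NG → ℝ :=
  fun i =>
    -(((C * B * Cᵀ) *ᵥ (Function.invFun (Rmat C B SG SB).mulVec (padSl SG SB v)))
      (Fin.castAdd NL i))

/-- J(S_G, S_B) as an N_G × N_L matrix. -/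
def Jmatrix {NG NL E : ℕ} (C : Matrix (Fin (NG + NL)) (Fin E) ℝ)
    (B : Matrix (Fin E) (Fin E) ℝ) (SG : Finset (Fin NG)) (SB : Finset (Fin E)) :
    Matrix (Fin NG) (Fin NL) ℝ :=
  Matrix.of fun i j => JFun C B SG SB (Pi.single j 1) i

/-!
Call `(ds, dθ)` a balanced direction if it is tangent to the equality constraints. Along such a
direction the change of the flow on branch `e` depends linearly on `ds` alone: if
`C B Cᵀ y = C B 1_e`, it equals `y · ds`, because `C B Cᵀ` is symmetric. Hence some cost `f`
satisfies `f · ds = ∑ i ∈ S_G, ds i + ∑ e ∈ S_B, (B Cᵀ dθ) e` along every balanced direction, and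
adding a constant to the potential `y` makes `f ≥ 0`. Place the lower bounds of `S_G` and `S_B`
exactly at an operating point with positive generation and keep every other constraint slack there.
At a feasible point, all terms on the right are then nonnegative for the direction leading to it
from the operating point, so the latter is optimal; for another optimal point all these terms
vanish. As `|S_G| + |S_B| = N_G - 1`, the gradients in `S_G ⊥ S_B` form a basis, so the direction is
zero.
-/

section LinearAlgebra

variable {m n : Type*} [Fintype n]

theorem isSymm_mul_mul_transpose {R : Type*} [CommSemiring R] (C : Matrix m n R)
    {B : Matrix n n R} (hB : B.IsSymm) : (C * B * Cᵀ).IsSymm := by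
  simp only [Matrix.IsSymm, transpose_mul, transpose_transpose, hB.eq, Matrix.mul_assoc]

variable [Fintype m]

theorem exists_mulVec_eq_of_forall_vecMul_eq_zero {K : Type*} [Field K] (A : Matrix m n K)
    {b : m → K} (h : ∀ y, y ᵥ* A = 0 → y ⬝ᵥ b = 0) : ∃ x, A *ᵥ x = b := by
  classical
  by_contra hb
  obtain ⟨φ, hφb, hφ⟩ := (LinearMap.range A.mulVecLin).exists_le_ker_of_notMem (v := b) hb
  obtain ⟨y, rfl⟩ := (dotProductEquiv K m).surjective φ
  refine hφb (h y ?_)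
  refine dotProduct_eq_zero _ fun x => ?_
  rw [← dotProduct_mulVec]
  exact hφ ⟨x, rfl⟩

theorem mul_mul_transpose_mulVec_eq_zero_iff (C : Matrix m n ℝ) {B : Matrix n n ℝ}
    (hB : B.PosDef) {x : m → ℝ} : (C * B * Cᵀ) *ᵥ x = 0 ↔ Cᵀ *ᵥ x = 0 := by
  refine ⟨fun hx => ?_, fun hx => by rw [← mulVec_mulVec, hx, mulVec_zero]⟩
  by_contra hne
  have energy_pos : 0 < (Cᵀ *ᵥ x) ⬝ᵥ (B *ᵥ (Cᵀ *ᵥ x)) := hB.dotProduct_mulVec_pos hne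
  have energy_eq : (Cᵀ *ᵥ x) ⬝ᵥ (B *ᵥ (Cᵀ *ᵥ x)) = x ⬝ᵥ ((C * B * Cᵀ) *ᵥ x) := by
    rw [← mulVec_mulVec, ← mulVec_mulVec, dotProduct_mulVec x C, mulVec_transpose]
  rw [energy_eq, hx, dotProduct_zero] at energy_pos
  exact energy_pos.false

theorem apply_eq_zero_of_dotProduct_eq_zero {R : Type*} [Semiring R] [PartialOrder R]
    [IsOrderedRing R] [NoZeroDivisors R] {v w : m → R} (hv : 0 ≤ v) (hw : 0 ≤ w)
    (h : v ⬝ᵥ w = 0) {i : m} (hi : v i ≠ 0) : w i = 0 := by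
  have terms_eq_zero := (Finset.sum_eq_zero_iff_of_nonneg
    fun j _ => mul_nonneg (hv j) (hw j)).1 h
  exact (mul_eq_zero.1 (terms_eq_zero i (Finset.mem_univ i))).resolve_left hi

end LinearAlgebra

section Network

variable {NG NL E : ℕ} {C : Matrix (Fin (NG + NL)) (Fin E) ℝ} {B : Matrix (Fin E) (Fin E) ℝ}

theorem PosDiag.posDef (hB : PosDiag B) : B.PosDef := by
  rw [← IsDiag.diagonal_diag (A := B) fun e e' h => hB.2 e e' h]
  exact posDef_diagonal_iff.2 hB.1

namespace ConnectedIncidence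

theorem transpose_mulVec_const (hC : ConnectedIncidence C) (c : ℝ) : Cᵀ *ᵥ (fun _ => c) = 0 :=
  (hC _).2 ⟨c, rfl⟩

theorem sum_mulVec_eq_zero (hC : ConnectedIncidence C) (x : Fin E → ℝ) :
    ∑ i, (C *ᵥ x) i = 0 := by
  rw [← one_dotProduct, dotProduct_mulVec, ← mulVec_transpose]
  exact (congrArg (· ⬝ᵥ x) (hC.transpose_mulVec_const 1)).trans (zero_dotProduct x)

theorem mulVec_add_const (hC : ConnectedIncidence C) (θ : Fin (NG + NL) → ℝ) (c : ℝ) :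
    (C * B * Cᵀ) *ᵥ (θ + fun _ => c) = (C * B * Cᵀ) *ᵥ θ := by
  rw [mulVec_add, ← mulVec_mulVec (fun _ => c), hC.transpose_mulVec_const, mulVec_zero, add_zero]

theorem exists_mulVec_eq (hC : ConnectedIncidence C) (hB : B.PosDef) {b : Fin (NG + NL) → ℝ}
    (hb : ∑ i, b i = 0) : ∃ θ, (C * B * Cᵀ) *ᵥ θ = b := by
  refine exists_mulVec_eq_of_forall_vecMul_eq_zero _ fun y hy => ?_
  have hBsymm : B.IsSymm := hB.isHermitian
  rw [← mulVec_transpose, (isSymm_mul_mul_transpose C hBsymm).eq,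
    mul_mul_transpose_mulVec_eq_zero_iff C hB] at hy
  obtain ⟨c, rfl⟩ := (hC y).1 hy
  simp only [dotProduct, ← Finset.mul_sum, hb, mul_zero]

theorem exists_mulVec_eq_and_apply_eq_zero (hC : ConnectedIncidence C) (hB : B.PosDef)
    {b : Fin (NG + NL) → ℝ} (hb : ∑ i, b i = 0) (i₀ : Fin (NG + NL)) :
    ∃ θ, θ i₀ = 0 ∧ (C * B * Cᵀ) *ᵥ θ = b := by
  obtain ⟨θ, hθ⟩ := hC.exists_mulVec_eq hB hb
  exact ⟨θ + fun _ => -θ i₀, add_neg_cancel _, (hC.mulVec_add_const θ _).trans hθ⟩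

end ConnectedIncidence

/-- `(ds, dθ)` is a direction tangent to the equality constraints of the DC-OPF: the reference angle
is unchanged and the power-flow equations hold with loads unchanged. -/
structure IsBalancedDirection (C : Matrix (Fin (NG + NL)) (Fin E) ℝ)
    (B : Matrix (Fin E) (Fin E) ℝ) (ds : Fin NG → ℝ) (dθ : Fin (NG + NL) → ℝ) : Prop where
  angle_zero : ∀ h : 0 < NG + NL, dθ ⟨0, h⟩ = 0
  power_flow : (C * B * Cᵀ) *ᵥ dθ = Fin.append ds 0

theorem Feasible.isBalancedDirection_sub {ξ : XiT NG E} {sl : Fin NL → ℝ} {sg sg' : Fin NG → ℝ}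
    {θ θ' : Fin (NG + NL) → ℝ} (h' : Feasible C B ξ sl sg' θ') (h : Feasible C B ξ sl sg θ) :
    IsBalancedDirection C B (sg' - sg) (θ' - θ) where
  angle_zero h₀ := by rw [Pi.sub_apply, h'.1 h₀, h.1 h₀, sub_zero]
  power_flow := by
    rw [mulVec_sub, h'.2.1, h.2.1]
    ext i
    refine Fin.addCases (fun j => ?_) (fun j => ?_) i <;> simp

/-- The derivative along `(ds, dθ)` of a constraint, as a linear function of its gradient. -/
def directionalDerivative {k l : ℕ} (ds : Fin k → ℝ) (dθ : Fin l → ℝ) :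
    (Fin k → ℝ) × (Fin l → ℝ) →ₗ[ℝ] ℝ :=
  (dotProductEquiv ℝ (Fin k) ds).coprod (dotProductEquiv ℝ (Fin l) dθ)

theorem directionalDerivative_apply {k l : ℕ} (ds : Fin k → ℝ) (dθ : Fin l → ℝ)
    (p : (Fin k → ℝ) × (Fin l → ℝ)) : directionalDerivative ds dθ p = ds ⬝ᵥ p.1 + dθ ⬝ᵥ p.2 :=
  rfl

theorem directionalDerivative_eq_zero_iff {k l : ℕ} {ds : Fin k → ℝ} {dθ : Fin l → ℝ} :
    directionalDerivative ds dθ = 0 ↔ ds = 0 ∧ dθ = 0 := by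
  refine ⟨fun h => ⟨?_, ?_⟩, fun ⟨hs, hθ⟩ => LinearMap.ext fun p => ?_⟩
  · simpa [directionalDerivative_apply] using LinearMap.congr_fun h (ds, 0)
  · simpa [directionalDerivative_apply] using LinearMap.congr_fun h (0, dθ)
  · simp [directionalDerivative_apply, hs, hθ]

namespace IsBalancedDirection

variable {ds : Fin NG → ℝ} {dθ : Fin (NG + NL) → ℝ}

theorem directionalDerivative_eqGrad (hd : IsBalancedDirection C B ds dθ) :
    ∀ k, directionalDerivative ds dθ (eqGrad C B k) = 0
  | Sum.inl _ => by
    simp only [directionalDerivative_apply, eqGrad, dotProduct_zero, zero_add]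
    refine Finset.sum_eq_zero fun j _ => ?_
    by_cases hj : (j : ℕ) = 0
    · rw [show j = ⟨0, hj ▸ j.isLt⟩ from Fin.ext hj, hd.angle_zero, zero_mul]
    · simp only [hj, if_false, mul_zero]
  | Sum.inr i => by
    have generation_term : ds ⬝ᵥ (fun k : Fin NG => if (k : ℕ) = (i : ℕ) then -1 else 0) =
        -Fin.append ds (0 : Fin NL → ℝ) i := by
      refine Fin.addCases (fun j => ?_) (fun j => ?_) i
      · simp [dotProduct, Fin.val_inj]
      · have hne (k : Fin NG) : (k : ℕ) ≠ NG + j := by omega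
        simp [dotProduct, hne]
    have angle_term : dθ ⬝ᵥ (C * B * Cᵀ) i = Fin.append ds (0 : Fin NL → ℝ) i := by
      rw [dotProduct_comm, ← hd.power_flow]
      rfl
    rw [directionalDerivative_apply]
    exact (congrArg₂ (· + ·) generation_term angle_term).trans (neg_add_cancel _)

theorem eq_zero_of_perp (hd : IsBalancedDirection C B ds dθ) {SG : Finset (Fin NG)}
    {SB : Finset (Fin E)} (hperp : Perp C B SG SB) (hcard : SG.card + SB.card + 1 = NG)
    (hG : ∀ i ∈ SG, ds i = 0) (hflow : ∀ e ∈ SB, ((B * Cᵀ) *ᵥ dθ) e = 0) :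
    ds = 0 ∧ dθ = 0 := by
  have hspan := hperp.span_eq_top_of_card_eq_finrank' (by
    simp only [Fintype.card_sum, Fintype.card_unit, Fintype.card_fin, Fintype.card_coe,
      Module.finrank_prod, Module.finrank_fintype_fun_eq_card]
    omega)
  rw [← directionalDerivative_eq_zero_iff]
  refine LinearMap.ext_on_range hspan ?_
  rintro (k | i | e)
  · exact hd.directionalDerivative_eqGrad k
  · simpa [directionalDerivative_apply] using hG i i.2
  · simpa [directionalDerivative_apply, dotProduct_comm dθ, mulVec] using hflow e e.2

end IsBalancedDirection

/-- `γ` and `μ` are reduced costs of generation and of flow for the cost vector `f`: the multipliers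
left in the stationarity condition of the DC-OPF once those of the equality constraints have been
eliminated by testing on balanced directions only. -/
def IsReducedCost (C : Matrix (Fin (NG + NL)) (Fin E) ℝ) (B : Matrix (Fin E) (Fin E) ℝ)
    (f γ : Fin NG → ℝ) (μ : Fin E → ℝ) : Prop :=
  ∀ ds dθ, IsBalancedDirection C B ds dθ → f ⬝ᵥ ds = γ ⬝ᵥ ds + μ ⬝ᵥ ((B * Cᵀ) *ᵥ dθ)

theorem isReducedCost_of_mulVec_eq (hB : B.IsSymm) {y : Fin (NG + NL) → ℝ} {μ : Fin E → ℝ}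
    (hy : (C * B * Cᵀ) *ᵥ y = (C * B) *ᵥ μ) (γ : Fin NG → ℝ) :
    IsReducedCost C B (γ + fun i => y (Fin.castAdd NL i)) γ μ := by
  intro ds dθ hd
  rw [add_dotProduct, add_right_inj]
  calc (fun i => y (Fin.castAdd NL i)) ⬝ᵥ ds
      = y ⬝ᵥ Fin.append ds 0 := by simp [dotProduct, Fin.sum_univ_add]
    _ = ((C * B * Cᵀ) *ᵥ y) ⬝ᵥ dθ := by
      rw [← hd.power_flow, dotProduct_mulVec, ← mulVec_transpose,
        (isSymm_mul_mul_transpose C hB).eq]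
    _ = μ ⬝ᵥ ((B * Cᵀ) *ᵥ dθ) := by
      rw [hy, ← vecMul_transpose, ← dotProduct_mulVec, transpose_mul, hB.eq]

theorem ConnectedIncidence.exists_nonneg_isReducedCost (hC : ConnectedIncidence C)
    (hB : B.PosDef) (γ : Fin NG → ℝ) (μ : Fin E → ℝ) :
    ∃ f, (∀ i, 0 ≤ f i) ∧ IsReducedCost C B f γ μ := by
  have hsum : ∑ i, ((C * B) *ᵥ μ) i = 0 := by
    rw [← mulVec_mulVec]
    exact hC.sum_mulVec_eq_zero _
  obtain ⟨y, hy⟩ := hC.exists_mulVec_eq hB hsum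
  obtain ⟨c, hc⟩ := (Set.finite_range fun i => γ i + y (Fin.castAdd NL i)).bddBelow
  have hshift := (hC.mulVec_add_const y (-c)).trans hy
  refine ⟨_, fun i => ?_, isReducedCost_of_mulVec_eq hB.isHermitian hshift γ⟩
  have hci : c ≤ γ i + y (Fin.castAdd NL i) := hc ⟨i, rfl⟩
  simp only [Pi.add_apply]
  linarith

/-- The Karush–Kuhn–Tucker conditions at `(sg, θ)`, feasibility aside, with multipliers `γ`, `μ` on
the lower generation and flow bounds and multiplier zero on the upper ones. -/
structure IsLowerKKT (C : Matrix (Fin (NG + NL)) (Fin E) ℝ) (B : Matrix (Fin E) (Fin E) ℝ)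
    (f : Fin NG → ℝ) (ξ : XiT NG E) (sg : Fin NG → ℝ) (θ : Fin (NG + NL) → ℝ)
    (γ : Fin NG → ℝ) (μ : Fin E → ℝ) : Prop where
  stationary : IsReducedCost C B f γ μ
  generation_nonneg : 0 ≤ γ
  flow_nonneg : 0 ≤ μ
  generation_slack : γ ⬝ᵥ (sg - ξ.2.1) = 0
  flow_slack : μ ⬝ᵥ ((B * Cᵀ) *ᵥ θ - ξ.2.2.2) = 0

namespace IsLowerKKT

variable {f : Fin NG → ℝ} {ξ : XiT NG E} {sl : Fin NL → ℝ} {sg sg' : Fin NG → ℝ}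
  {θ θ' : Fin (NG + NL) → ℝ} {γ : Fin NG → ℝ} {μ : Fin E → ℝ}

theorem cost_sub_cost (hK : IsLowerKKT C B f ξ sg θ γ μ) (h : Feasible C B ξ sl sg θ)
    (h' : Feasible C B ξ sl sg' θ') :
    f ⬝ᵥ sg' - f ⬝ᵥ sg = γ ⬝ᵥ (sg' - ξ.2.1) + μ ⬝ᵥ ((B * Cᵀ) *ᵥ θ' - ξ.2.2.2) := by
  have hstat := hK.stationary _ _ (h'.isBalancedDirection_sub h)
  have hgen := hK.generation_slack
  have hflow := hK.flow_slack
  simp only [mulVec_sub, dotProduct_sub] at hstat hgen hflow ⊢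
  linarith

theorem isOptimal (hK : IsLowerKKT C B f ξ sg θ γ μ) (h : Feasible C B ξ sl sg θ) :
    IsOptimal C B f ξ sl sg θ := by
  refine ⟨h, fun sg' θ' h' => ?_⟩
  rw [← sub_nonneg, hK.cost_sub_cost h h']
  exact add_nonneg
    (dotProduct_nonneg_of_nonneg hK.generation_nonneg fun i => sub_nonneg.2 (h'.2.2.1 i).1)
    (dotProduct_nonneg_of_nonneg hK.flow_nonneg fun e => sub_nonneg.2 (h'.2.2.2 e).1)

theorem binding_of_isOptimal (hK : IsLowerKKT C B f ξ sg θ γ μ) (h : Feasible C B ξ sl sg θ)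
    (h' : IsOptimal C B f ξ sl sg' θ') :
    (∀ i, γ i ≠ 0 → sg' i = ξ.2.1 i) ∧
      ∀ e, μ e ≠ 0 → ((B * Cᵀ) *ᵥ θ') e = ξ.2.2.2 e := by
  have hgen : 0 ≤ sg' - ξ.2.1 := fun i => sub_nonneg.2 (h'.1.2.2.1 i).1
  have hflow : 0 ≤ (B * Cᵀ) *ᵥ θ' - ξ.2.2.2 := fun e => sub_nonneg.2 (h'.1.2.2.2 e).1
  have hcost := hK.cost_sub_cost h h'.1
  have hle := h'.2 sg θ h
  have hγ := dotProduct_nonneg_of_nonneg hK.generation_nonneg hgen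
  have hμ := dotProduct_nonneg_of_nonneg hK.flow_nonneg hflow
  exact ⟨fun i hi => sub_eq_zero.1 <|
      apply_eq_zero_of_dotProduct_eq_zero hK.generation_nonneg hgen (by linarith) hi,
    fun e he => sub_eq_zero.1 <|
      apply_eq_zero_of_dotProduct_eq_zero hK.flow_nonneg hflow (by linarith) he⟩

theorem eq_of_isOptimal (hK : IsLowerKKT C B f ξ sg θ γ μ) (h : Feasible C B ξ sl sg θ)
    {SG : Finset (Fin NG)} {SB : Finset (Fin E)} (hγ : ∀ i ∈ SG, γ i ≠ 0)
    (hμ : ∀ e ∈ SB, μ e ≠ 0) (hperp : Perp C B SG SB) (hcard : SG.card + SB.card + 1 = NG)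
    (h' : IsOptimal C B f ξ sl sg' θ') : sg' = sg ∧ θ' = θ := by
  obtain ⟨hgen, hflow⟩ := hK.binding_of_isOptimal h (hK.isOptimal h)
  obtain ⟨hgen', hflow'⟩ := hK.binding_of_isOptimal h h'
  obtain ⟨hs, hθ⟩ := (h'.1.isBalancedDirection_sub h).eq_zero_of_perp hperp hcard
    (fun i hi => by rw [Pi.sub_apply, hgen i (hγ i hi), hgen' i (hγ i hi), sub_self])
    (fun e he => by
      rw [mulVec_sub, Pi.sub_apply, hflow e (hμ e he), hflow' e (hμ e he), sub_self])
  exact ⟨sub_eq_zero.1 hs, sub_eq_zero.1 hθ⟩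

end IsLowerKKT

/-- Limits for which the binding constraints at generation `sg > 0` and flow `p` are exactly the
lower bounds indexed by `SG` and `SB`. -/
def lowerBindingLimits (SG : Finset (Fin NG)) (SB : Finset (Fin E)) (sg : Fin NG → ℝ)
    (p : Fin E → ℝ) : XiT NG E :=
  (fun i => sg i + 1, fun i => if i ∈ SG then sg i else 0,
    fun e => p e + 1, fun e => if e ∈ SB then p e else p e - 1)

theorem mem_iff_binding_and_not_both {ι : Type*} [DecidableEq ι] (S : Finset ι) (i : ι) {x y : ℝ}
    (h : y ≠ x) :
    (i ∈ S ↔ (x = x + 1 ∨ x = if i ∈ S then x else y)) ∧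
      ¬(x = x + 1 ∧ x = if i ∈ S then x else y) := by
  by_cases hi : i ∈ S <;> simp [hi, h.symm]

section LowerBindingLimits

variable (SG : Finset (Fin NG)) (SB : Finset (Fin E)) {sg : Fin NG → ℝ}
  {θ : Fin (NG + NL) → ℝ}

theorem feasible_lowerBindingLimits {sl : Fin NL → ℝ} (hsg : ∀ i, 0 < sg i)
    (hθ : ∀ h : 0 < NG + NL, θ ⟨0, h⟩ = 0)
    (hflow : (C * B * Cᵀ) *ᵥ θ = Fin.append sg fun j => -sl j) :
    Feasible C B (lowerBindingLimits SG SB sg ((B * Cᵀ) *ᵥ θ)) sl sg θ := by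
  refine ⟨hθ, hflow, fun i => ⟨?_, (lt_add_one _).le⟩, fun e => ⟨?_, (lt_add_one _).le⟩⟩ <;>
    dsimp only [lowerBindingLimits] <;> split_ifs
  exacts [le_rfl, (hsg i).le, le_rfl, (sub_one_lt _).le]

theorem lowerBindingLimits_mem_omegaXi {sl : Fin NL → ℝ} {p : Fin E → ℝ} (hsg : ∀ i, 0 < sg i)
    (hsl : ∀ j, 0 < sl j) (h : Feasible C B (lowerBindingLimits SG SB sg p) sl sg θ) :
    lowerBindingLimits SG SB sg p ∈ OmegaXi C B := by
  refine ⟨fun i => ?_, fun i => (h.2.2.1 i).1.trans_lt (lt_add_one _), fun e => ?_,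
    sl, hsl, sg, θ, h⟩ <;> dsimp only [lowerBindingLimits] <;> split_ifs
  exacts [(hsg i).le, le_rfl, lt_add_one _, by linarith]

theorem isLowerKKT_lowerBindingLimits {f : Fin NG → ℝ}
    (hf : IsReducedCost C B f (Set.indicator SG 1) (Set.indicator SB 1)) :
    IsLowerKKT C B f (lowerBindingLimits SG SB sg ((B * Cᵀ) *ᵥ θ)) sg θ
      (Set.indicator SG 1) (Set.indicator SB 1) where
  stationary := hf
  generation_nonneg := Set.indicator_nonneg fun _ _ => zero_le_one
  flow_nonneg := Set.indicator_nonneg fun _ _ => zero_le_one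
  generation_slack := Finset.sum_eq_zero fun i _ => by
    by_cases hi : i ∈ SG <;> simp [lowerBindingLimits, hi]
  flow_slack := Finset.sum_eq_zero fun e _ => by
    by_cases he : e ∈ SB <;> simp [lowerBindingLimits, he]

end LowerBindingLimits

end Network

theorem exists_instance_with_binding_pattern_general {NG NL E : ℕ} (hNL : 0 < NL)
    (C : Matrix (Fin (NG + NL)) (Fin E) ℝ) (B : Matrix (Fin E) (Fin E) ℝ)
    (hConn : ConnectedIncidence C) (hB : B.PosDef) (SG : Finset (Fin NG)) (SB : Finset (Fin E))
    (hcard : SG.card + SB.card + 1 = NG) (hperp : Perp C B SG SB) :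
    ∃ (f : Fin NG → ℝ) (ξ : XiT NG E) (sl : Fin NL → ℝ),
      (∀ i, 0 ≤ f i) ∧ ξ ∈ OmegaXi C B ∧ sl ∈ OmegaSl C B ξ ∧
      ∃ sg θ, IsOptimal C B f ξ sl sg θ ∧
        (∀ sg' θ', IsOptimal C B f ξ sl sg' θ' → sg' = sg ∧ θ' = θ) ∧
        (∀ i : Fin NG, ((i ∈ SG) ↔ (sg i = ξ.1 i ∨ sg i = ξ.2.1 i)) ∧
          ¬(sg i = ξ.1 i ∧ sg i = ξ.2.1 i)) ∧
        (∀ e : Fin E, ((e ∈ SB) ↔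
            (((B * Cᵀ) *ᵥ θ) e = ξ.2.2.1 e ∨ ((B * Cᵀ) *ᵥ θ) e = ξ.2.2.2 e)) ∧
          ¬(((B * Cᵀ) *ᵥ θ) e = ξ.2.2.1 e ∧ ((B * Cᵀ) *ᵥ θ) e = ξ.2.2.2 e)) := by
  let sg : Fin NG → ℝ := fun _ => NL
  let sl : Fin NL → ℝ := fun _ => NG
  have hsg (i : Fin NG) : 0 < sg i := Nat.cast_pos.2 hNL
  have hsl (j : Fin NL) : 0 < sl j := Nat.cast_pos.2 (by omega)
  have hsum : ∑ i, Fin.append sg (fun j => -sl j) i = 0 := by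
    simp [Fin.sum_univ_add, sg, sl, mul_comm]
  obtain ⟨θ, hθ, hflow⟩ :=
    hConn.exists_mulVec_eq_and_apply_eq_zero hB hsum ⟨0, by omega⟩
  obtain ⟨f, hf_nonneg, hf⟩ := hConn.exists_nonneg_isReducedCost hB
    (Set.indicator SG 1) (Set.indicator SB 1)
  have hfeas := feasible_lowerBindingLimits SG SB hsg (fun _ => hθ) hflow
  have hKKT := isLowerKKT_lowerBindingLimits SG SB (sg := sg) (θ := θ) hf
  refine ⟨f, lowerBindingLimits SG SB sg ((B * Cᵀ) *ᵥ θ), sl, hf_nonneg,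
    lowerBindingLimits_mem_omegaXi SG SB hsg hsl hfeas, ⟨hsl, sg, θ, hfeas⟩, sg, θ,
    hKKT.isOptimal hfeas, fun sg' θ' => hKKT.eq_of_isOptimal hfeas ?_ ?_ hperp hcard,
    fun i => mem_iff_binding_and_not_both SG i (hsg i).ne,
    fun e => mem_iff_binding_and_not_both SB e (sub_one_lt _).ne⟩
  · exact fun i hi => by simp [hi]
  · exact fun e he => by simp [he]

theorem exists_instance_with_binding_pattern {NG NL E : ℕ} (hNG : 0 < NG) (hNL : 0 < NL) (hE : 0 < E)
    (C : Matrix (Fin (NG + NL)) (Fin E) ℝ) (B : Matrix (Fin E) (Fin E) ℝ)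
    (hInc : IsIncidence C) (hConn : ConnectedIncidence C) (hB : PosDiag B)
    (SG : Finset (Fin NG)) (SB : Finset (Fin E))
    (hcard : SG.card + SB.card = NG - 1) (hperp : Perp C B SG SB) :
    ∃ (f : Fin NG → ℝ) (ξ : XiT NG E) (sl : Fin NL → ℝ),
      (∀ i, 0 ≤ f i) ∧ ξ ∈ OmegaXi C B ∧ sl ∈ OmegaSl C B ξ ∧
      ∃ sg θ, IsOptimal C B f ξ sl sg θ ∧
        (∀ sg' θ', IsOptimal C B f ξ sl sg' θ' → sg' = sg ∧ θ' = θ) ∧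
        (∀ i : Fin NG, ((i ∈ SG) ↔ (sg i = ξ.1 i ∨ sg i = ξ.2.1 i)) ∧
          ¬(sg i = ξ.1 i ∧ sg i = ξ.2.1 i)) ∧
        (∀ e : Fin E, ((e ∈ SB) ↔
            (((B * Cᵀ) *ᵥ θ) e = ξ.2.2.1 e ∨ ((B * Cᵀ) *ᵥ θ) e = ξ.2.2.2 e)) ∧
          ¬(((B * Cᵀ) *ᵥ θ) e = ξ.2.2.1 e ∧ ((B * Cᵀ) *ᵥ θ) e = ξ.2.2.2 e)) := by
  exact exists_instance_with_binding_pattern_general hNL C B hConn hB.posDef SG SB (by omega) hperp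

end
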